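/- For any n complex alternating n×n matrices A_1, …, A_n (A_iᵀ = −A_i) and any n−1 complex symmetric n×n matrices B_1, …, B_{n−1} (B_jᵀ = B_j), the double alternating sum Σ_{σ ∈ S_n} Σ_{τ ∈ S_{n−1}} sgn(σ) sgn(τ) · A_{σ(1)} B_{τ(1)} A_{σ(2)} B_{τ(2)} ⋯ A_{σ(n−1)} B_{τ(n−1)} A_{σ(n)} equals the zero matrix, where the product is the ordered matrix product. -/

import Mathlib

open Matrix

section CharpolyTools

open Polynomial

variable {R ι : Type*} [CommRing R] [Fintype ι] [DecidableEq ι]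

/-- Jacobi's formula for the derivative of the determinant of a matrix of polynomials. -/
theorem derivative_det_eq_sum_updateCol (N : Matrix ι ι R[X]) :
    derivative N.det = ∑ i, (N.updateCol i fun k => derivative (N k i)).det := by
  simp only [det_apply', derivative_sum]
  rw [Finset.sum_comm]
  refine Finset.sum_congr rfl fun σ _ => ?_
  rw [← Finset.mul_sum, derivative_mul, derivative_intCast, zero_mul, zero_add,
    derivative_prod_finset]
  congr 1
  refine Finset.sum_congr rfl fun i _ => ?_
  rw [← Finset.prod_erase_mul _ _ (Finset.mem_univ i), updateCol_self]
  congr 1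
  refine Finset.prod_congr rfl fun j hj => ?_
  rw [updateCol_ne (Finset.ne_of_mem_erase hj)]

theorem derivative_charpoly_eq_trace_adjugate (M : Matrix ι ι R) :
    derivative M.charpoly = (adjugate M.charmatrix).trace := by
  rw [charpoly, derivative_det_eq_sum_updateCol, trace]
  refine Finset.sum_congr rfl fun i _ => ?_
  have h : (fun k => derivative (M.charmatrix k i)) = Pi.single i 1 := by
    ext1 k
    rcases eq_or_ne k i with rfl | hk
    · simp
    · simp [hk]
  rw [h, diag_apply, ← transpose_apply (adjugate _), adjugate_transpose, adjugate_def, of_apply,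
    transpose_transpose, cramer_apply]

theorem charmatrix_mul_adjugate (M : Matrix ι ι R) :
    (X : R[X]) • adjugate M.charmatrix =
      M.map C * adjugate M.charmatrix + M.charpoly • (1 : Matrix ι ι R[X]) := by
  have h := mul_adjugate M.charmatrix
  rw [charmatrix, sub_mul] at h
  rw [← charmatrix] at h
  rw [charpoly, ← h]
  simp [RingHom.mapMatrix_apply, smul_eq_diagonal_mul]

theorem X_pow_smul_trace_map_mul_adjugate (M : Matrix ι ι R)
    (hM : ∀ k, (M ^ (k + 1)).trace = 0) (m : ℕ) :
    (X : R[X]) ^ m * (M.map C * adjugate M.charmatrix).trace =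
      ((M.map C) ^ (m + 1) * adjugate M.charmatrix).trace := by
  induction m with
  | zero => simp
  | succ m ih =>
    have ht : ((M.map (C : R →+* R[X])) ^ (m + 1)).trace = 0 := by
      have := congrArg (C : R →+* R[X]) (hM m)
      rw [AddMonoidHom.map_trace, map_zero] at this
      rw [← this]
      congr 1
      exact (map_pow (C : R →+* R[X]).mapMatrix M (m + 1)).symm
    rw [pow_succ', mul_assoc, ih, ← smul_eq_mul, ← trace_smul, ← Matrix.mul_smul,
      charmatrix_mul_adjugate, mul_add, trace_add, ← mul_assoc, ← pow_succ, Matrix.mul_smul,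
      mul_one, trace_smul, ht, smul_zero, add_zero]

theorem trace_map_mul_adjugate_charmatrix (M : Matrix ι ι R)
    (hM : ∀ k, (M ^ (k + 1)).trace = 0) :
    (M.map C * adjugate M.charmatrix).trace = 0 := by
  have hCH : ∑ k ∈ Finset.range (M.charpoly.natDegree + 1),
      C (M.charpoly.coeff k) • (M.map (C : R →+* R[X])) ^ k = 0 := by
    have h := congrArg (C : R →+* R[X]).mapMatrix (aeval_self_charpoly M)
    rw [aeval_eq_sum_range, map_sum, map_zero] at h
    rw [← h]
    refine Finset.sum_congr rfl fun k _ => ?_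
    rw [← RingHom.mapMatrix_apply, ← map_pow]
    ext1 i j
    simp
  have h : M.charpoly * (M.map C * adjugate M.charmatrix).trace = 0 := by
    conv_lhs => rw [M.charpoly.as_sum_range_C_mul_X_pow]
    rw [Finset.sum_mul]
    simp only [mul_assoc, X_pow_smul_trace_map_mul_adjugate M hM]
    rw [← trace_zero ι R[X], ← zero_mul (M.map C * adjugate M.charmatrix), ← hCH,
      Finset.sum_mul, trace_sum]
    refine Finset.sum_congr rfl fun k _ => ?_
    rw [smul_mul, trace_smul, smul_eq_mul, ← mul_assoc, ← pow_succ]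
  exact (M.charpoly_monic.mul_right_eq_zero_iff).1 h

theorem charpoly_eq_X_pow_of_trace_pow_eq_zero [IsAddTorsionFree R] (M : Matrix ι ι R)
    (hM : ∀ k, (M ^ (k + 1)).trace = 0) : M.charpoly = X ^ Fintype.card ι := by
  nontriviality R
  have h : X * derivative M.charpoly = Fintype.card ι • M.charpoly := by
    rw [derivative_charpoly_eq_trace_adjugate, ← smul_eq_mul, ← trace_smul,
      charmatrix_mul_adjugate, trace_add, trace_map_mul_adjugate_charmatrix M hM, zero_add,
      trace_smul, trace_one, smul_eq_mul, nsmul_eq_mul, mul_comm]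
  have hlead : M.charpoly.coeff (Fintype.card ι) = 1 := by
    rw [← M.charpoly_natDegree_eq_dim]
    exact M.charpoly_monic
  ext k
  rw [coeff_X_pow]
  split_ifs with hk
  · rw [hk, hlead]
  · have hc := congrArg (fun p => p.coeff k) h
    have hc' : k • M.charpoly.coeff k = Fintype.card ι • M.charpoly.coeff k := by
      cases k with
      | zero => simpa using hc
      | succ k => 
        simp only [coeff_X_mul, coeff_derivative, coeff_smul] at hc
        rw [← hc, nsmul_eq_mul, mul_comm]
        push_cast; rfl
    by_contra hne
    have hsub : ((k : ℤ) - Fintype.card ι) • M.charpoly.coeff k = 0 := by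
      rw [sub_smul, natCast_zsmul, natCast_zsmul, hc', sub_self]
    have := (IsAddTorsionFree.zsmul_eq_zero_iff_left hne).1 hsub
    omega

/-- The `2 × 2` minors of the adjugate are divisible by the determinant. -/
theorem det_dvd_adjugate_minor (N : Matrix ι ι R) (hN : IsRegular N.det) (a b i j : ι) :
    N.det ∣ adjugate N a i * adjugate N b j - adjugate N a j * adjugate N b i := by
  rcases eq_or_ne a b with rfl | hab
  · exact ⟨0, by ring⟩
  let U : Matrix ι (Fin 2) R := of fun k =>
    ![adjugate N k i - (1 : Matrix ι ι R) k a, adjugate N k j - (1 : Matrix ι ι R) k b]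
  let V : Matrix (Fin 2) ι R := of ![Pi.single a 1, Pi.single b 1]
  have hQ : (1 + U * V).det =
      adjugate N a i * adjugate N b j - adjugate N a j * adjugate N b i := by
    rw [det_one_add_mul_comm, det_fin_two]
    simp [U, V, hab, hab.symm, one_apply]
  have hNQ : N * (1 + U * V) =
      (N.updateCol a (N.det • Pi.single i 1)).updateCol b (N.det • Pi.single j 1) := by
    ext k l
    have h1 (c) : ∑ x, N k x * adjugate N x c = N.det * (1 : Matrix ι ι R) k c := by
      rw [← mul_apply, mul_adjugate]; simp
    have h2 (c) : ∑ x, N k x * (1 : Matrix ι ι R) x c = N k c := by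
      rw [← mul_apply, mul_one]
    rw [mul_add, mul_one, ← Matrix.mul_assoc]
    have h3 (c : Fin 2) : (N * U) k c =
        ![N.det * (1 : Matrix ι ι R) k i - N k a, N.det * (1 : Matrix ι ι R) k j - N k b] c := by
      fin_cases c <;> simp [U, mul_apply, mul_sub, Finset.sum_sub_distrib, h1, h2]
    rw [Matrix.add_apply, mul_apply]
    simp only [h3]
    simp [V]
    rcases eq_or_ne l b with rfl | hb
    · simp [hab.symm, one_apply, Pi.single_apply]
    · rcases eq_or_ne l a with rfl | ha
      · simp [hab, one_apply, Pi.single_apply]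
      · simp [hb, ha]
  have hdet := congrArg det hNQ
  rw [det_mul, hQ, det_updateCol_smul] at hdet
  have hcomm : (N.updateCol a (N.det • Pi.single i 1)).updateCol b (Pi.single j 1) =
      (N.updateCol b (Pi.single j 1)).updateCol a (N.det • Pi.single i 1) := by
    ext k l
    simp only [updateCol_apply]
    split_ifs <;> simp_all
  rw [hcomm, det_updateCol_smul] at hdet
  exact ⟨_, hN.left hdet⟩

theorem adjugate_charmatrix_of_charpoly_eq_X_pow (M : Matrix ι ι R)
    (hM : M.charpoly = X ^ Fintype.card ι) :
    adjugate M.charmatrix = ∑ i ∈ Finset.range (Fintype.card ι),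
      (X : R[X]) ^ i • (M ^ (Fintype.card ι - 1 - i)).map C := by
  have hnil : (C : R →+* R[X]).mapMatrix M ^ Fintype.card ι = 0 := by
    have h := aeval_self_charpoly M
    rw [hM, map_pow, aeval_X] at h
    rw [← map_pow, h, map_zero]
  have hgeom := (scalar_commute (X : R[X]) (Commute.all _)
    ((C : R →+* R[X]).mapMatrix M)).mul_geom_sum₂ (Fintype.card ι)
  rw [hnil, sub_zero, ← charmatrix] at hgeom
  have h := congrArg (adjugate M.charmatrix * ·) hgeom
  simp only [← mul_assoc, adjugate_mul] at h
  rw [← charpoly, hM, ← map_pow] at h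
  ext1 a b
  have hX : IsLeftRegular ((X : R[X]) ^ Fintype.card ι) := (monic_X_pow _).isRegular.left
  refine hX ?_
  have hab := congrFun (congrFun h a) b
  rw [smul_mul, one_mul, Matrix.smul_apply, smul_eq_mul, scalar_apply (X ^ _), mul_diagonal,
    mul_comm _ (X ^ _)] at hab
  simp only
  rw [← hab]
  congr 1
  simp only [Matrix.sum_apply]
  refine Finset.sum_congr rfl fun i _ => ?_
  rw [← map_pow, ← map_pow, scalar_apply, diagonal_mul]
  rfl

theorem sum_antidiagonal_pow_mul_pow_swap (M : Matrix ι ι R) {m : ℕ}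
    (hm : Fintype.card ι = m + 1) (hM : M.charpoly = X ^ Fintype.card ι) (a b i j : ι) :
    ∑ p ∈ Finset.HasAntidiagonal.antidiagonal m, (M ^ p.1) a i * (M ^ p.2) b j =
      ∑ p ∈ Finset.HasAntidiagonal.antidiagonal m, (M ^ p.1) a j * (M ^ p.2) b i := by
  have hcoeff (c d : ι) {k : ℕ} (hk : k ≤ m) :
      (adjugate M.charmatrix c d).coeff k = (M ^ (m - k)) c d := by
    rw [adjugate_charmatrix_of_charpoly_eq_X_pow M hM, Matrix.sum_apply, finsetSum_coeff,
      Finset.sum_eq_single k]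
    · simp [hm]
    · intro l _ hl
      rw [Matrix.smul_apply, map_apply, smul_eq_mul, coeff_X_pow_mul', coeff_C]
      split_ifs <;> first | rfl | omega
    · intro h
      simp at h
      omega
  have hprod (i j : ι) : (adjugate M.charmatrix a i * adjugate M.charmatrix b j).coeff m =
      ∑ p ∈ Finset.HasAntidiagonal.antidiagonal m, (M ^ p.1) a i * (M ^ p.2) b j := by
    rw [coeff_mul, ← Finset.Nat.sum_antidiagonal_swap]
    refine Finset.sum_congr rfl fun p hp => ?_
    have hp := Finset.HasAntidiagonal.mem_antidiagonal.1 hp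
    rw [Prod.fst_swap, Prod.snd_swap, hcoeff _ _ (by omega), hcoeff _ _ (by omega)]
    rw [show m - p.2 = p.1 by omega, show m - p.1 = p.2 by omega]
  have hdvd := det_dvd_adjugate_minor M.charmatrix M.charpoly_monic.isRegular a b i j
  rw [← charpoly, hM, hm, X_pow_dvd_iff] at hdvd
  have h := hdvd m (Nat.lt_succ_self m)
  rw [coeff_sub, hprod, hprod] at h
  exact sub_eq_zero.1 h

end CharpolyTools

theorem trace_mul_of_anticommute {E ι : Type*} [Ring E] [Fintype ι] {A B : Matrix ι ι E}
    (h : ∀ i j, A i j * B j i = -(B j i * A i j)) : (A * B).trace = -(B * A).trace := by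
  simp only [trace, diag_apply, mul_apply, h, Finset.sum_neg_distrib]
  rw [Finset.sum_comm]

section AnticommutingEntries

variable {E ι : Type*} [Ring E] [Fintype ι] [DecidableEq ι]

theorem sum_mul_mul_transpose_eq_zero [IsAddTorsionFree E] {κ : Type*} (s : Finset κ)
    (P Q : κ → Matrix ι ι (Subring.center E)) {A : Matrix ι ι E} (hA : Aᵀ = -A)
    (hPQ : ∀ a b i j, ∑ p ∈ s, P p a i * Q p b j = ∑ p ∈ s, P p a j * Q p b i) :
    ∑ p ∈ s, (Subring.center E).subtype.mapMatrix (P p) * A *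
      (Subring.center E).subtype.mapMatrix (Q p)ᵀ = 0 := by
  ext1 a b
  have hsum : (∑ p ∈ s, (Subring.center E).subtype.mapMatrix (P p) * A *
      (Subring.center E).subtype.mapMatrix (Q p)ᵀ) a b =
        ∑ j, ∑ i, (∑ p ∈ s, P p a i * Q p b j) • A i j := by
    simp only [Matrix.sum_apply, mul_apply, Finset.sum_mul, Finset.sum_smul]
    rw [Finset.sum_comm]
    refine Finset.sum_congr rfl fun j _ => ?_
    rw [Finset.sum_comm]
    refine Finset.sum_congr rfl fun i _ => Finset.sum_congr rfl fun p _ => ?_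
    simp only [RingHom.mapMatrix_apply, map_apply, transpose_apply, Subring.subtype_apply,
      Subring.smul_def, Subring.coe_mul, smul_eq_mul, mul_assoc]
    rw [← Subring.mem_center_iff.1 (Q p b j).2]
  rw [hsum, Matrix.zero_apply, ← self_eq_neg]
  conv_lhs => rw [Finset.sum_comm]
  rw [← Finset.sum_neg_distrib]
  refine Finset.sum_congr rfl fun i _ => ?_
  rw [← Finset.sum_neg_distrib]
  refine Finset.sum_congr rfl fun j _ => ?_
  rw [hPQ, ← smul_neg, show A i j = -A j i from congrFun (congrFun hA j) i]

/-- If `A` is alternating and `B` is symmetric, with entries that anticommute with each other and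
have central products, then `(A * B) ^ m * A` vanishes in size `m + 1`. -/
theorem pow_mul_eq_zero_of_anticommute [IsAddTorsionFree E] {A B : Matrix ι ι E} {m : ℕ}
    (hm : Fintype.card ι = m + 1) (hA : Aᵀ = -A) (hB : Bᵀ = B)
    (hAB : ∀ i j k l, A i j * B k l = -(B k l * A i j))
    (hc : ∀ i j, (A * B) i j ∈ Subring.center E) : (A * B) ^ m * A = 0 := by
  let f := (Subring.center E).subtype
  have hf : Function.Injective f := Subtype.val_injective
  have : IsAddTorsionFree (Subring.center E) :=
    Function.Injective.isAddTorsionFree f.toAddMonoidHom hf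
  let M : Matrix ι ι (Subring.center E) := of fun i j => ⟨(A * B) i j, hc i j⟩
  have hM : f.mapMatrix M = A * B := rfl
  have hMt : f.mapMatrix Mᵀ = B * A := by
    ext i j
    change (A * B) j i = (B * A) i j
    simp only [mul_apply, hAB]
    refine Finset.sum_congr rfl fun k _ => ?_
    rw [← mul_neg, show B k i = B i k from congrFun (congrFun hB i) k,
      show A k j = -A j k from congrFun (congrFun hA j) k]
  have htrace (N : Matrix ι ι (Subring.center E)) : f N.trace = (f.mapMatrix N).trace :=
    AddMonoidHom.map_trace f.toAddMonoidHom N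
  have hpow (k : ℕ) : (M ^ (k + 1)).trace = 0 := by
    rw [← self_eq_neg]
    apply hf
    conv_rhs => rw [← trace_transpose, transpose_pow]
    rw [map_neg, htrace, htrace, map_pow, map_pow, hM, hMt, pow_succ', mul_assoc,
      trace_mul_of_anticommute, mul_assoc, mul_pow_mul, ← mul_assoc, ← pow_succ']
    intro i j
    rw [← hM, ← map_pow, mul_apply, Finset.mul_sum, Finset.sum_mul, ← Finset.sum_neg_distrib]
    refine Finset.sum_congr rfl fun l _ => ?_
    have hl : A i j * f ((M ^ k) l i) = f ((M ^ k) l i) * A i j :=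
      Subring.mem_center_iff.1 ((M ^ k) l i).2 _
    rw [RingHom.mapMatrix_apply, map_apply, mul_assoc, ← hl, ← mul_assoc, ← mul_assoc, hAB,
      neg_mul]
  have hsum := sum_mul_mul_transpose_eq_zero (Finset.HasAntidiagonal.antidiagonal m)
    (fun p => M ^ p.1) (fun p => M ^ p.2) hA
    (sum_antidiagonal_pow_mul_pow_swap M hm (charpoly_eq_X_pow_of_trace_pow_eq_zero M hpow))
  have hterm : ∀ p ∈ Finset.HasAntidiagonal.antidiagonal m,
      f.mapMatrix (M ^ p.1) * A * f.mapMatrix (M ^ p.2)ᵀ = (A * B) ^ m * A := by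
    intro p hp
    rw [transpose_pow, map_pow, map_pow, hM, hMt, mul_assoc, ← mul_pow_mul, ← mul_assoc,
      ← pow_add, Finset.HasAntidiagonal.mem_antidiagonal.1 hp]
  rw [Finset.sum_congr rfl hterm, Finset.sum_const, Finset.Nat.card_antidiagonal] at hsum
  ext1 i j
  exact (nsmul_eq_zero_iff_right m.succ_ne_zero).1 (congrFun (congrFun hsum i) j)

end AnticommutingEntries

section ExteriorTools

open ExteriorAlgebra

variable {K V : Type*} [CommRing K] [AddCommGroup V] [Module K V]

theorem ExteriorAlgebra.ι_mul_ι_comm (v w : V) : ι K v * ι K w = -(ι K w * ι K v) :=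
  eq_neg_of_add_eq_zero_left (ι_add_mul_swap v w)

theorem ExteriorAlgebra.ι_mul_ι_mem_center (v w : V) :
    ι K v * ι K w ∈ Subring.center (ExteriorAlgebra K V) := by
  rw [Subring.mem_center_iff]
  intro x
  induction x using ExteriorAlgebra.induction with
  | algebraMap r => exact Algebra.commutes r _
  | ι u =>
    rw [← mul_assoc, ι_mul_ι_comm u v, neg_mul, mul_assoc, ι_mul_ι_comm u w, mul_neg, neg_neg,
      mul_assoc]
  | mul a b ha hb => rw [mul_assoc, hb, ← mul_assoc, ha, mul_assoc]
  | add a b ha hb => rw [add_mul, mul_add, ha, hb]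

theorem ExteriorAlgebra.ι_mul_ιMulti (v : V) {k : ℕ} (u : Fin k → V) :
    ι K v * ιMulti K k u = (-1 : ℤˣ) ^ k • (ιMulti K k u * ι K v) := by
  induction k with
  | zero => simp
  | succ k ih =>
    rw [ιMulti_succ_apply, ← mul_assoc, ι_mul_ι_comm, neg_mul, mul_assoc, ih, pow_succ,
      mul_smul_comm, mul_assoc, mul_neg_one, Units.neg_smul]

/-- Interleaved products of two families of vectors agree, up to a sign depending only on the
length, with the product of the two wedge products. -/
theorem ExteriorAlgebra.exists_sign_interleave (m : ℕ) :
    ∃ ε : ℤˣ, ∀ (u : Fin (m + 1) → V) (v : Fin m → V),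
      (List.ofFn fun t => ι K (u t.castSucc) * ι K (v t)).prod * ι K (u (Fin.last m)) =
        ε • (ιMulti K (m + 1) u * ιMulti K m v) := by
  induction m with
  | zero => exact ⟨1, fun u v => by simp [ιMulti_succ_apply]⟩
  | succ m ih =>
    obtain ⟨ε, hε⟩ := ih
    refine ⟨ε * (-1) ^ (m + 1), fun u v => ?_⟩
    have h := hε (vecTail u) (vecTail v)
    simp only [vecTail, Function.comp_apply, Fin.succ_last] at h
    rw [List.ofFn_succ, List.prod_cons, mul_assoc, ιMulti_succ_apply u, ιMulti_succ_apply v]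
    simp only [← Fin.succ_castSucc]
    rw [h, Fin.castSucc_zero, mul_smul_comm, mul_smul, mul_assoc, mul_assoc,
      ← mul_assoc _ _ (ιMulti K m _)]
    change ε • (ι K (u 0) *
      (ι K (v 0) * ιMulti K (m + 1) (vecTail u) * ιMulti K m (vecTail v))) = _
    rw [ι_mul_ιMulti, smul_mul_assoc, mul_smul_comm, mul_assoc]

theorem ExteriorAlgebra.exists_linearMap_ιMulti_single (K : Type*) [CommRing K] (p q : ℕ) :
    ∃ (e : Fin p → Fin (p + q) → K) (f : Fin q → Fin (p + q) → K)
      (φ : ExteriorAlgebra K (Fin (p + q) → K) →ₗ[K] K),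
      φ (ιMulti K p e * ιMulti K q f) = 1 := by
  refine ⟨fun i => Pi.single (Fin.castAdd q i) 1, fun j => Pi.single (Fin.natAdd p j) 1,
    liftAlternating (Function.update 0 (p + q) detRowAlternating), ?_⟩
  have happ : Fin.append (fun i => Pi.single (Fin.castAdd q i) (1 : K))
      (fun j => Pi.single (Fin.natAdd p j) 1) =
        fun i => (1 : Matrix (Fin (p + q)) (Fin (p + q)) K) i := by
    ext i
    refine Fin.addCases (fun i => ?_) (fun i => ?_) i <;>
      simp [one_apply, Pi.single_apply, eq_comm]
  rw [ιMulti_mul_ιMulti, liftAlternating_apply_ιMulti, Function.update_self, happ]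
  exact det_one

/-- Summing an alternating map against all index functions reduces to a signed sum over
permutations. -/
theorem AlternatingMap.sum_smul_comp_eq_sum_perm {N P : Type*} [AddCommGroup N] [Module K N]
    [AddCommGroup P] [Module K P] {n : ℕ} (g : V [⋀^Fin n]→ₗ[K] N) (e : Fin n → V)
    (F : (Fin n → Fin n) → N →ₗ[K] P) :
    ∑ a : Fin n → Fin n, F a (g (e ∘ a)) =
      ∑ σ : Equiv.Perm (Fin n), Equiv.Perm.sign σ • F σ (g e) := by
  symm
  refine Fintype.sum_of_injective (fun σ : Equiv.Perm (Fin n) => (σ : Fin n → Fin n))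
    DFunLike.coe_injective _ _ (fun a ha => ?_) (fun σ => ?_)
  · rw [g.map_eq_zero_of_not_injective]
    · exact (F a).map_zero
    intro h
    exact ha ⟨Equiv.ofBijective a (Finite.injective_iff_bijective.1 h.of_comp), rfl⟩
  · rw [g.map_perm]
    rcases Int.units_eq_one_or (Equiv.Perm.sign σ) with h | h <;> simp [h]

end ExteriorTools

section GrassmannMatrix

variable {K E ι : Type*} [CommRing K] [Ring E] [Algebra K E] [Fintype ι] [DecidableEq ι]

theorem smul_mapMatrix_mul_smul_mapMatrix (x y : E) (C D : Matrix ι ι K) :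
    (x • (algebraMap K E).mapMatrix C) * (y • (algebraMap K E).mapMatrix D) =
      (x * y) • (algebraMap K E).mapMatrix (C * D) := by
  ext i j
  simp only [mul_apply, Matrix.smul_apply, RingHom.mapMatrix_apply, map_apply, smul_eq_mul,
    map_mul, Finset.mul_sum]
  refine Finset.sum_congr rfl fun k _ => ?_
  rw [mul_assoc, ← mul_assoc (algebraMap K E _), Algebra.commutes, mul_assoc, mul_assoc]

theorem prod_ofFn_smul_mapMatrix {m : ℕ} (x : Fin m → E) (C : Fin m → Matrix ι ι K) :
    (List.ofFn fun t => x t • (algebraMap K E).mapMatrix (C t)).prod =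
      (List.ofFn x).prod • (algebraMap K E).mapMatrix (List.ofFn C).prod := by
  induction m with
  | zero => simp
  | succ m ih =>
    simp only [List.ofFn_succ, List.prod_cons]
    rw [ih, smul_mapMatrix_mul_smul_mapMatrix]

/-- Expansion of `(A * B) ^ m * A` for `A` and `B` generic linear combinations of matrices. -/
theorem pow_mul_sum_smul_mapMatrix {m : ℕ} {α β : Type*} [Fintype α] [Fintype β]
    (x : α → E) (y : β → E) (A : α → Matrix ι ι K) (B : β → Matrix ι ι K) :
    ((∑ i, x i • (algebraMap K E).mapMatrix (A i)) *
        (∑ j, y j • (algebraMap K E).mapMatrix (B j))) ^ m *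
        (∑ i, x i • (algebraMap K E).mapMatrix (A i)) =
      ∑ a : Fin (m + 1) → α, ∑ b : Fin m → β,
        ((List.ofFn fun t => x (a t.castSucc) * y (b t)).prod * x (a (Fin.last m))) •
          (algebraMap K E).mapMatrix
            ((List.ofFn fun t => A (a t.castSucc) * B (b t)).prod * A (a (Fin.last m))) := by
  classical
  have hpow : ((∑ i, x i • (algebraMap K E).mapMatrix (A i)) *
        (∑ j, y j • (algebraMap K E).mapMatrix (B j))) ^ m =
      ∑ r : Fin m → α × β, (List.ofFn fun t => x (r t).1 * y (r t).2).prod •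
        (algebraMap K E).mapMatrix (List.ofFn fun t => A (r t).1 * B (r t).2).prod := by
    simp only [Finset.sum_mul_sum, smul_mapMatrix_mul_smul_mapMatrix, ← Fintype.sum_prod_type']
    rw [← MultilinearMap.mkPiAlgebraFin_apply_const (R := ℤ), MultilinearMap.map_sum]
    simp only [MultilinearMap.mkPiAlgebraFin_apply, prod_ofFn_smul_mapMatrix]
  rw [hpow, Finset.sum_mul_sum]
  simp only [smul_mapMatrix_mul_smul_mapMatrix, ← Fintype.sum_prod_type']
  refine Fintype.sum_equiv (((Equiv.arrowProdEquivProdArrow _ _ _).prodCongr (Equiv.refl α)).trans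
    ((Equiv.prodAssoc _ _ _).trans (((Equiv.refl _).prodCongr (Equiv.prodComm _ _)).trans
    ((Equiv.prodAssoc _ _ _).symm.trans
      (((Equiv.prodComm _ _).trans (Fin.snocEquiv fun _ : Fin (m + 1) => α)).prodCongr
        (Equiv.refl _))))))
    _ _ ?_
  rintro ⟨r, i⟩
  simp [Fin.snocEquiv]

theorem sum_linearMap_smul_eq_zero {α : Type*} [Fintype α] (φ : E →ₗ[K] K) (x : α → E)
    (D : α → Matrix ι ι K) (h : ∑ a, x a • (algebraMap K E).mapMatrix (D a) = 0) :
    ∑ a, φ (x a) • D a = 0 := by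
  ext1 k l
  have hkl := congrArg φ (congrFun (congrFun h k) l)
  simp only [Matrix.sum_apply, Matrix.smul_apply, RingHom.mapMatrix_apply, map_apply,
    smul_eq_mul, Matrix.zero_apply, map_zero, map_sum, ← Algebra.commutes, ← Algebra.smul_def,
    map_smul] at hkl
  simp only [Matrix.sum_apply, Matrix.smul_apply, smul_eq_mul, Matrix.zero_apply, ← hkl, mul_comm]

end GrassmannMatrix

open ExteriorAlgebra in
theorem pow_mul_sum_ι_smul_eq_zero {K V : Type*} [Field K] [CharZero K] [AddCommGroup V]
    [Module K V] {m : ℕ} {α β : Type*} [Fintype α] [Fintype β]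
    (A : α → Matrix (Fin (m + 1)) (Fin (m + 1)) K) (hA : ∀ i, (A i)ᵀ = -A i)
    (B : β → Matrix (Fin (m + 1)) (Fin (m + 1)) K) (hB : ∀ j, (B j)ᵀ = B j)
    (e : α → V) (f : β → V) :
    ((∑ i, ι K (e i) • (algebraMap K (ExteriorAlgebra K V)).mapMatrix (A i)) *
        (∑ j, ι K (f j) • (algebraMap K (ExteriorAlgebra K V)).mapMatrix (B j))) ^ m *
      (∑ i, ι K (e i) • (algebraMap K (ExteriorAlgebra K V)).mapMatrix (A i)) = 0 := by
  have : IsAddTorsionFree (ExteriorAlgebra K V) :=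
    letI := Module.compHom (ExteriorAlgebra K V) (algebraMap ℚ K)
    .of_module_rat (ExteriorAlgebra K V)
  let A' : Matrix (Fin (m + 1)) (Fin (m + 1)) (ExteriorAlgebra K V) :=
    ∑ i, ι K (e i) • (algebraMap K (ExteriorAlgebra K V)).mapMatrix (A i)
  let B' : Matrix (Fin (m + 1)) (Fin (m + 1)) (ExteriorAlgebra K V) :=
    ∑ j, ι K (f j) • (algebraMap K (ExteriorAlgebra K V)).mapMatrix (B j)
  have hA'_apply (k l) : A' k l = ι K (∑ i, A i k l • e i) := by
    simp only [A', Matrix.sum_apply, Matrix.smul_apply, RingHom.mapMatrix_apply, map_apply,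
      smul_eq_mul, ← Algebra.commutes, ← Algebra.smul_def, map_sum, map_smul]
  have hB'_apply (k l) : B' k l = ι K (∑ j, B j k l • f j) := by
    simp only [B', Matrix.sum_apply, Matrix.smul_apply, RingHom.mapMatrix_apply, map_apply,
      smul_eq_mul, ← Algebra.commutes, ← Algebra.smul_def, map_sum, map_smul]
  have hA' : A'ᵀ = -A' := by
    ext1 k l
    have h (i) : A i l k = -A i k l := congrFun (congrFun (hA i) k) l
    simp only [transpose_apply, Matrix.neg_apply, hA'_apply, h, neg_smul, Finset.sum_neg_distrib,
      map_neg]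
  have hB' : B'ᵀ = B' := by
    ext1 k l
    have h (j) : B j l k = B j k l := congrFun (congrFun (hB j) k) l
    simp only [transpose_apply, hB'_apply, h]
  change (A' * B') ^ m * A' = 0
  refine pow_mul_eq_zero_of_anticommute (Fintype.card_fin _) hA' hB' (fun i j k l => ?_)
    fun i j => ?_
  · rw [hA'_apply, hB'_apply]
    exact ι_mul_ι_comm _ _
  · rw [mul_apply]
    refine sum_mem fun k _ => ?_
    rw [hA'_apply, hB'_apply]
    exact ι_mul_ι_mem_center _ _

open ExteriorAlgebra in
/-- The double alternating sum of the products of `m + 1` alternating matrices interlaced with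
`m` symmetric matrices of size `m + 1` vanishes. -/
theorem alternating_mul_symmetric_sum_eq_zero {K : Type*} [Field K] [CharZero K] {m : ℕ}
    (A : Fin (m + 1) → Matrix (Fin (m + 1)) (Fin (m + 1)) K) (hA : ∀ i, (A i)ᵀ = -A i)
    (B : Fin m → Matrix (Fin (m + 1)) (Fin (m + 1)) K) (hB : ∀ j, (B j)ᵀ = B j) :
    ∑ σ : Equiv.Perm (Fin (m + 1)), ∑ τ : Equiv.Perm (Fin m),
      (Equiv.Perm.sign σ * Equiv.Perm.sign τ) •
        ((List.ofFn fun t : Fin m => A (σ t.castSucc) * B (τ t)).prod * A (σ (Fin.last m))) =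
      0 := by
  obtain ⟨e, f, φ, hφ⟩ := ExteriorAlgebra.exists_linearMap_ιMulti_single K (m + 1) m
  obtain ⟨ε, hε⟩ := ExteriorAlgebra.exists_sign_interleave (K := K)
    (V := Fin (m + 1 + m) → K) m
  have hzero := pow_mul_sum_ι_smul_eq_zero A hA B hB e f
  let C (a : Fin (m + 1) → Fin (m + 1)) (b : Fin m → Fin m) :=
    (List.ofFn fun t => A (a t.castSucc) * B (b t)).prod * A (a (Fin.last m))
  have hfun : ∑ a : Fin (m + 1) → Fin (m + 1), ∑ b : Fin m → Fin m,
      φ (ιMulti K _ (e ∘ a) * ιMulti K _ (f ∘ b)) • C a b = 0 := by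
    rw [pow_mul_sum_smul_mapMatrix] at hzero
    simp only [← Fintype.sum_prod_type'] at hzero ⊢
    have h := sum_linearMap_smul_eq_zero φ _ _ hzero
    have hw (a : Fin (m + 1) → Fin (m + 1)) (b : Fin m → Fin m) := hε (e ∘ a) (f ∘ b)
    simp only [Function.comp_apply] at hw
    simp only [hw, Units.smul_def, map_zsmul, smul_assoc, ← Finset.smul_sum] at h
    rcases Int.units_eq_one_or ε with hε | hε <;> simpa [hε] using h
  have hinner (a : Fin (m + 1) → Fin (m + 1)) := AlternatingMap.sum_smul_comp_eq_sum_perm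
    (ιMulti K m) f fun b =>
      (φ ∘ₗ LinearMap.mulLeft K (ιMulti K _ (e ∘ a))).smulRight (C a b)
  have houter := AlternatingMap.sum_smul_comp_eq_sum_perm
    (ιMulti K (m + 1)) e fun a => ∑ τ : Equiv.Perm (Fin m), Equiv.Perm.sign τ •
      (φ ∘ₗ LinearMap.mulRight K (ιMulti K _ f)).smulRight (C a τ)
  simp only [LinearMap.smulRight_apply, LinearMap.comp_apply, LinearMap.mulLeft_apply,
    LinearMap.mulRight_apply, LinearMap.sum_apply, LinearMap.smul_apply, hφ, one_smul]
    at hinner houter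
  simp only [hinner, houter] at hfun
  simpa only [Finset.smul_sum, ← mul_smul] using hfun

theorem alt_sym_amitsur_levitzki_type (n : ℕ) (hn : 0 < n)
    (A : Fin n → Matrix (Fin n) (Fin n) ℂ) (hA : ∀ i, (A i)ᵀ = -A i)
    (B : Fin (n - 1) → Matrix (Fin n) (Fin n) ℂ) (hB : ∀ j, (B j)ᵀ = B j) :
    ∑ σ : Equiv.Perm (Fin n), ∑ τ : Equiv.Perm (Fin (n - 1)),
      ((Equiv.Perm.sign σ * Equiv.Perm.sign τ : ℤˣ) : ℤ) •
        ((List.ofFn fun t : Fin (n - 1) =>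
            A (σ (t.castLE (by omega))) * B (τ t)).prod *
          A (σ ⟨n - 1, by omega⟩))
    = 0 := by
  obtain ⟨m, rfl⟩ := Nat.exists_eq_add_one_of_ne_zero hn.ne'
  exact alternating_mul_symmetric_sum_eq_zero A hA B hB
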